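/- arXiv:2405.02188 — 2 statements merged into one kernel-verified Lean document; each statement's English description precedes it below -/
import Mathlib

section
/- For every real number x with x ≤ 1.79, exp(x) ≤ 1 + x + x². -/
theorem exp_179_aux : Real.exp 1.79 ≤ 1 + 1.79 + 1.79 ^ 2 := by
  have h1 := Real.exp_one_lt_d9
  have h2 := Real.exp_bound' (x := 0.79) (by norm_num) (by norm_num) (n := 8) (by norm_num)
  have h3 : Real.exp 0.79 ≤ 2.205 := by
    refine h2.trans ?_
    norm_num [Finset.sum_range_succ, Nat.factorial]
  have h4 : Real.exp 1.79 = Real.exp 1 * Real.exp 0.79 := by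
    rw [← Real.exp_add]; norm_num
  rw [h4]
  calc Real.exp 1 * Real.exp 0.79 ≤ 2.7182818286 * 2.205 := by
        gcongr
    _ ≤ _ := by norm_num

theorem anti_aux : AntitoneOn (fun x : ℝ => (1 + x + x ^ 2) * Real.exp (-x)) (Set.Ici 1) := by
  have hd : ∀ x : ℝ, HasDerivAt (fun x : ℝ => (1 + x + x ^ 2) * Real.exp (-x))
      (x * (1 - x) * Real.exp (-x)) x := by
    intro x
    have h1 : HasDerivAt (fun x : ℝ => 1 + x + x ^ 2) (1 + 2 * x) x := by
      refine (((hasDerivAt_id x).const_add 1).add (hasDerivAt_pow 2 x)).congr_deriv ?_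
      norm_num
    have h2 : HasDerivAt (fun x : ℝ => Real.exp (-x)) (Real.exp (-x) * (-1)) x :=
      (hasDerivAt_neg x).exp
    refine (h1.mul h2).congr_deriv ?_
    ring
  apply antitoneOn_of_deriv_nonpos (convex_Ici 1)
  · exact fun x _ => (hd x).continuousAt.continuousWithinAt
  · exact fun x _ => (hd x).differentiableAt.differentiableWithinAt
  · intro x hx
    rw [interior_Ici, Set.mem_Ioi] at hx
    rw [(hd x).deriv]
    exact mul_nonpos_of_nonpos_of_nonneg (by nlinarith) (Real.exp_pos _).le

/-- For every real `x ≤ 1.79`, `exp x ≤ 1 + x + x²`. -/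
theorem exp_le_one_add_add_sq (x : ℝ) (hx : x ≤ 1.79) :
    Real.exp x ≤ 1 + x + x ^ 2 := by
  rcases le_total x (-1) with h | h
  · have : Real.exp x ≤ 1 := Real.exp_le_one_iff.2 (by linarith)
    nlinarith
  rcases le_total x 1 with h' | h'
  · have := (abs_le.1 (Real.abs_exp_sub_one_sub_id_le (abs_le.2 ⟨h, h'⟩))).2
    linarith
  · have h1 := anti_aux (a := x) (b := 1.79) h' (by norm_num [Set.mem_Ici]) hx
    have h2 : 1 ≤ (1 + 1.79 + 1.79 ^ 2) * Real.exp (-1.79) := by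
      rw [Real.exp_neg, ← div_eq_mul_inv, one_le_div (Real.exp_pos _)]
      exact exp_179_aux
    have h3 : 1 ≤ (1 + x + x ^ 2) * Real.exp (-x) := h2.trans h1
    rwa [Real.exp_neg, ← div_eq_mul_inv, one_le_div (Real.exp_pos _)] at h3
end

section
/- Let (Ω, 𝒜, P) be a probability space and 𝒢 a sub-σ-algebra. Let X be a real random variable with X and X² integrable, and let η be a bounded, nonnegative, 𝒢-measurable random variable such that η·(X − E[X | 𝒢]) ≤ 1.79 almost surely. Set μ = E[X | 𝒢] and α = η·E[(X − μ)² | 𝒢]. Then E[ exp(η·(X − μ − α)) | 𝒢 ] ≤ 1 almost surely. -/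
open MeasureTheory

/-- The value at the endpoint. -/
lemma exp_endpoint : Real.exp (1.79 : ℝ) ≤ 1 + 1.79 + 1.79 ^ 2 := by
  have h1 := Real.exp_one_lt_d9
  have h2 := Real.exp_bound' (x := 0.79) (by norm_num) (by norm_num) (n := 8) (by norm_num)
  have h3 : Real.exp (0.79 : ℝ) ≤ 2.2036 := by
    refine h2.trans ?_
    norm_num [Finset.sum_range_succ, Nat.factorial]
  have h4 : Real.exp (1.79 : ℝ) = Real.exp 1 * Real.exp 0.79 := by
    rw [← Real.exp_add]; norm_num
  rw [h4]
  have h5 := Real.exp_pos (0.79 : ℝ)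
  calc Real.exp 1 * Real.exp 0.79 ≤ 2.7182818286 * 2.2036 := by gcongr
    _ ≤ _ := by norm_num

lemma aux_hasDeriv (x : ℝ) :
    HasDerivAt (fun x : ℝ => (1 + x + x ^ 2) * Real.exp (-x)) (x * (1 - x) * Real.exp (-x)) x := by
  have h1 : HasDerivAt (fun x : ℝ => 1 + x + x ^ 2) (1 + 2 * x) x := by
    have := ((hasDerivAt_id x).const_add 1).add ((hasDerivAt_id x).pow 2)
    exact this.congr_deriv (by simp)
  have h2 : HasDerivAt (fun x : ℝ => Real.exp (-x)) (Real.exp (-x) * (-1)) x :=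
    ((hasDerivAt_id x).neg).exp
  exact (h1.mul h2).congr_deriv (by ring)

/-- The pointwise inequality. -/
lemma exp_le_quad {x : ℝ} (hx : x ≤ 1.79) : Real.exp x ≤ 1 + x + x ^ 2 := by
  suffices h : 1 ≤ (1 + x + x ^ 2) * Real.exp (-x) by
    have h2 := mul_le_mul_of_nonneg_right h (Real.exp_pos x).le
    rwa [mul_assoc, ← Real.exp_add, neg_add_cancel, Real.exp_zero, one_mul, mul_one] at h2
  set f : ℝ → ℝ := fun x : ℝ => (1 + x + x ^ 2) * Real.exp (-x) with hf
  have hd : Differentiable ℝ f := fun x => (aux_hasDeriv x).differentiableAt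
  have hc : Continuous f := hd.continuous
  have hder : ∀ x, deriv f x = x * (1 - x) * Real.exp (-x) := fun x => (aux_hasDeriv x).deriv
  have f0 : f 0 = 1 := by simp [hf]
  change 1 ≤ f x
  rcases le_total x 0 with h0 | h0
  · have : AntitoneOn f (Set.Iic 0) := by
      refine antitoneOn_of_deriv_nonpos (convex_Iic 0) hc.continuousOn hd.differentiableOn ?_
      intro y hy
      rw [interior_Iic, Set.mem_Iio] at hy
      rw [hder]
      exact mul_nonpos_of_nonpos_of_nonneg (by nlinarith) (Real.exp_pos _).le
    rw [← f0]
    exact this h0 (Set.mem_Iic.2 le_rfl) h0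
  rcases le_total x 1 with h1 | h1
  · have : MonotoneOn f (Set.Icc 0 1) := by
      refine monotoneOn_of_deriv_nonneg (convex_Icc 0 1) hc.continuousOn hd.differentiableOn ?_
      intro y hy
      rw [interior_Icc, Set.mem_Ioo] at hy
      rw [hder]
      exact mul_nonneg (by nlinarith) (Real.exp_pos _).le
    rw [← f0]
    exact this ⟨le_rfl, zero_le_one⟩ ⟨h0, h1⟩ h0
  · have : AntitoneOn f (Set.Ici 1) := by
      refine antitoneOn_of_deriv_nonpos (convex_Ici 1) hc.continuousOn hd.differentiableOn ?_
      intro y hy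
      rw [interior_Ici, Set.mem_Ioi] at hy
      rw [hder]
      exact mul_nonpos_of_nonpos_of_nonneg (by nlinarith) (Real.exp_pos _).le
    refine le_trans ?_ (this h1 (Set.mem_Ici.2 (h1.trans hx)) hx)
    have h2 := mul_le_mul_of_nonneg_right exp_endpoint (Real.exp_pos (-1.79)).le
    rw [← Real.exp_add, add_neg_cancel, Real.exp_zero] at h2
    exact h2

/-- Single-step conditional MGF bound: for `μ = E[X|𝒢]` and
`α = η·E[(X − μ)²|𝒢]`, with `η` nonnegative, bounded, `𝒢`-measurable and
`η·(X − μ) ≤ 1.79` a.s., we have `E[exp(η·(X − μ − α)) | 𝒢] ≤ 1` a.s. -/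
theorem conditional_mgf_bound
    {Ω : Type*} {m : MeasurableSpace Ω} {P : Measure Ω} [IsProbabilityMeasure P]
    (G : MeasurableSpace Ω) (hG : G ≤ m)
    (X η : Ω → ℝ)
    (hX_int : Integrable X P)
    (hX2_int : Integrable (fun ω => (X ω) ^ 2) P)
    (hη_meas : StronglyMeasurable[G] η)
    (hη_bdd : ∃ C : ℝ, ∀ ω, |η ω| ≤ C)
    (hη_nonneg : ∀ᵐ ω ∂P, 0 ≤ η ω)
    (hbound : ∀ᵐ ω ∂P, η ω * (X ω - (P[X | G]) ω) ≤ 1.79) :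
    ∀ᵐ ω ∂P,
      (P[fun ω' => Real.exp (η ω' * (X ω' - (P[X | G]) ω'
          - η ω' * (P[fun z => (X z - (P[X | G]) z) ^ 2 | G]) ω')) | G]) ω ≤ 1 := by
  obtain ⟨C, hC⟩ := hη_bdd
  have hXm : MemLp X 2 P := (memLp_two_iff_integrable_sq hX_int.aestronglyMeasurable).2 hX2_int
  have hμm : MemLp (P[X | G]) 2 P := hXm.condExp (by norm_num)
  set D : Ω → ℝ := fun z => X z - (P[X | G]) z with hD
  have hDm : MemLp D 2 P := hXm.sub hμm
  have hDint : Integrable D P := hX_int.sub integrable_condExp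
  have hD2 : Integrable (fun z => D z ^ 2) P := hDm.integrable_sq
  have hDdef : ∀ z, X z - (P[X | G]) z = D z := fun _ => rfl
  simp only [hDdef] at hbound ⊢
  set W : Ω → ℝ := P[fun z => D z ^ 2 | G] with hW
  have hWm : StronglyMeasurable[G] W := stronglyMeasurable_condExp
  have hW0 : 0 ≤ᵐ[P] W := condExp_nonneg (ae_of_all _ fun z => sq_nonneg (D z))
  have hDc : P[D | G] =ᵐ[P] 0 := by
    have h := condExp_sub hX_int (integrable_condExp (f := X) (m := G) (μ := P)) G
    have h2 : P[P[X | G] | G] = P[X | G] :=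
      condExp_of_stronglyMeasurable hG stronglyMeasurable_condExp integrable_condExp
    rw [h2, sub_self] at h
    exact h
  have hη2 : StronglyMeasurable[G] (fun z => η z ^ 2) := hη_meas.pow 2
  have hη2b : ∀ z, |η z ^ 2| ≤ C ^ 2 := fun z => by
    rw [abs_pow]; exact pow_le_pow_left₀ (abs_nonneg _) (hC z) 2
  have i1 : Integrable (η * D) P :=
    hDint.bdd_mul (c := C) (hη_meas.mono hG).aestronglyMeasurable (ae_of_all _ hC)
  have i2 : Integrable ((fun z => η z ^ 2) * (fun z => D z ^ 2)) P :=
    hD2.bdd_mul (c := C ^ 2) (hη2.mono hG).aestronglyMeasurable (ae_of_all _ hη2b)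
  have c1 : P[η * D | G] =ᵐ[P] η * P[D | G] :=
    condExp_mul_of_stronglyMeasurable_left hη_meas i1 hDint
  have c2 : P[(fun z => η z ^ 2) * (fun z => D z ^ 2) | G] =ᵐ[P] (fun z => η z ^ 2) * W :=
    condExp_mul_of_stronglyMeasurable_left hη2 i2 hD2
  set Y : Ω → ℝ := (fun _ => (1 : ℝ)) + η * D + (fun z => η z ^ 2) * (fun z => D z ^ 2) with hY
  have i0 : Integrable (fun _ : Ω => (1 : ℝ)) P := integrable_const 1
  have iY : Integrable Y P := (i0.add i1).add i2
  have cY : P[Y | G] =ᵐ[P] fun z => 1 + η z ^ 2 * W z := by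
    filter_upwards [condExp_add (i0.add i1) i2 G, condExp_add i0 i1 G, c1, c2, hDc]
      with z a1 a2 a3 a4 a5
    rw [a1, Pi.add_apply, a2, Pi.add_apply, a3, a4, condExp_const hG]
    simp [a5]
  set c : Ω → ℝ := fun z => Real.exp (-(η z ^ 2 * W z)) with hc
  have hcm : StronglyMeasurable[G] c :=
    Real.continuous_exp.comp_stronglyMeasurable (hη2.mul hWm).neg
  have hcb : ∀ᵐ z ∂P, ‖c z‖ ≤ 1 := by
    filter_upwards [hW0] with z hz
    have : 0 ≤ W z := hz
    rw [Real.norm_eq_abs, Real.abs_exp, Real.exp_le_one_iff]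
    nlinarith [mul_nonneg (sq_nonneg (η z)) this]
  have icY : Integrable (c * Y) P :=
    iY.bdd_mul (c := 1) (hcm.mono hG).aestronglyMeasurable hcb
  have ccY : P[c * Y | G] =ᵐ[P] c * P[Y | G] :=
    condExp_mul_of_stronglyMeasurable_left hcm icY iY
  have hle : (fun z => Real.exp (η z * (D z - η z * W z))) ≤ᵐ[P] c * Y := by
    filter_upwards [hbound] with z hz
    have h := exp_le_quad hz
    have e : η z * (D z - η z * W z) = -(η z ^ 2 * W z) + η z * D z := by ring
    simp only [Pi.mul_apply, hc, hY, Pi.add_apply]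
    rw [e, Real.exp_add]
    refine mul_le_mul_of_nonneg_left ?_ (Real.exp_pos _).le
    rwa [mul_pow] at h
  have hem : AEStronglyMeasurable[m] (fun z => Real.exp (η z * (D z - η z * W z))) P := by
    have hη' := (hη_meas.mono hG).aestronglyMeasurable (μ := P)
    have hW' := (hWm.mono hG).aestronglyMeasurable (μ := P)
    exact Real.continuous_exp.comp_aestronglyMeasurable
      (hη'.mul (hDint.aestronglyMeasurable.sub (hη'.mul hW')))
  have ie : Integrable (fun z => Real.exp (η z * (D z - η z * W z))) P := by
    refine icY.mono' hem ?_
    filter_upwards [hle] with z hz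
    rwa [Real.norm_eq_abs, Real.abs_exp]
  filter_upwards [condExp_mono (m := G) ie icY hle, ccY, cY] with z h1 h2 h3
  refine h1.trans ?_
  rw [h2, Pi.mul_apply, h3]
  have h4 := Real.add_one_le_exp (η z ^ 2 * W z)
  calc c z * (1 + η z ^ 2 * W z) ≤ c z * Real.exp (η z ^ 2 * W z) :=
        mul_le_mul_of_nonneg_left (by linarith) (Real.exp_pos _).le
    _ = 1 := by rw [hc]; simp only; rw [← Real.exp_add, neg_add_cancel, Real.exp_zero]
end
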